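/- Key step of Theorem 1 (best-responding attacks break the Defender's optimality): Let λ ∈ (0,1), ε₂ ∈ (0,1), and let h be a Borel classifier X → {−1,0,1}. Suppose the attack φ = (φ₋₁, φ₁) satisfies: φ₁(x) ∈ X∖P_h for every x ∈ P_h(ε₂) and φ₁(x) = x for every x ∉ P_h(ε₂); and φ₋₁(x) ∈ X∖N_h for every x ∈ N_h(ε₂) and φ₋₁(x) = x for every x ∉ N_h(ε₂). Then (φ₁#μ₁)(P_h(ε₂)) = 0 and (φ₋₁#μ₋₁)(P_h(ε₂)) ≥ μ₋₁(P_h(ε₂)). Consequently, if μ₋₁(P_h(ε₂)) > 0 then ν₋₁·(φ₋₁#μ₋₁)(P_h(ε₂)) > ν₁·(φ₁#μ₁)(P_h(ε₂)), and h does not minimize h′ ↦ R(h′,φ) over Borel classifiers h′ : X → {−1,0,1}. -/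

import Mathlib

open MeasureTheory Metric Set

noncomputable section

namespace AdvGame

variable {d : ℕ} {X : Set (EuclideanSpace ℝ (Fin d))}

/-- The sign classifier associated with a score function `g`:
outputs `1` if `g x > 0`, `-1` if `g x < 0`, and `0` if `g x = 0`. -/
def signClf (g : X → ℝ) : X → ℤ :=
  fun x => if 0 < g x then 1 else if g x < 0 then -1 else 0

/-- Membership in the hypothesis class `H = {sign ∘ g | g continuous}`. -/
def InH (h : X → ℤ) : Prop := ∃ g : X → ℝ, Continuous g ∧ h = signClf g

/-- A (Borel) classifier with values in `{-1, 0, 1}`. -/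
def IsClf (h : X → ℤ) : Prop := Measurable h ∧ ∀ x, h x = 1 ∨ h x = -1 ∨ h x = 0

/-- The positive region of a classifier. -/
def Ph (h : X → ℤ) : Set X := {x | h x = 1}

/-- The negative region of a classifier. -/
def Nh (h : X → ℤ) : Set X := {x | h x = -1}

/-- The attackable part of the positive region:
points of `P_h` at distance at most `δ` from `X ∖ P_h`. -/
def PhD (h : X → ℤ) (δ : ℝ) : Set X := {x | x ∈ Ph h ∧ infDist x (Ph h)ᶜ ≤ δ}

/-- The attackable part of the negative region. -/
def NhD (h : X → ℤ) (δ : ℝ) : Set X := {x | x ∈ Nh h ∧ infDist x (Nh h)ᶜ ≤ δ}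

/-- An attack (for one label): a Borel map `X → X` moving each point by at most `ε`. -/
def IsAttack (ε : ℝ) (φ : X → X) : Prop := Measurable φ ∧ ∀ x, dist (φ x) x ≤ ε

/-- A measure has full support `X`. -/
def FullSupport (μ : Measure X) : Prop := ∀ U : Set X, IsOpen U → U.Nonempty → 0 < μ U

/-- Adversarial risk `R(h, φ)` of a classifier `h` under the attack `φ = (φm, φp)`. -/
def advRisk (ν1 νm1 : ℝ) (μ1 μm1 : Measure X) (h : X → ℤ) (φm φp : X → X) : ℝ :=
  ν1 * ((μ1.map φp) {x | h x ≠ 1}).toReal + νm1 * ((μm1.map φm) {x | h x ≠ -1}).toReal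

/-- Standard (unattacked) risk `R(h)`. -/
def stdRisk (ν1 νm1 : ℝ) (μ1 μm1 : Measure X) (h : X → ℤ) : ℝ :=
  ν1 * (μ1 {x | h x ≠ 1}).toReal + νm1 * (μm1 {x | h x ≠ -1}).toReal

/-- The mass penalty `Ω_mass(φ)`. -/
def massPen (ν1 νm1 : ℝ) (μ1 μm1 : Measure X) (φm φp : X → X) : ℝ :=
  ν1 * (μ1 {x | φp x ≠ x}).toReal + νm1 * (μm1 {x | φm x ≠ x}).toReal

/-- The norm penalty `Ω_norm(φ)`. -/
def normPen (ν1 νm1 : ℝ) (μ1 μm1 : Measure X) (φm φp : X → X) : ℝ :=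
  ν1 * ∫ x, dist x (φp x) ∂μ1 + νm1 * ∫ x, dist x (φm x) ∂μm1

/-- Regularized adversarial score with the mass penalty. -/
def scoreMass (ν1 νm1 : ℝ) (μ1 μm1 : Measure X) (lam : ℝ) (h : X → ℤ)
    (φm φp : X → X) : ℝ :=
  advRisk ν1 νm1 μ1 μm1 h φm φp - lam * massPen ν1 νm1 μ1 μm1 φm φp

/-- Regularized adversarial score with the norm penalty. -/
def scoreNorm (ν1 νm1 : ℝ) (μ1 μm1 : Measure X) (lam : ℝ) (h : X → ℤ)
    (φm φp : X → X) : ℝ :=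
  advRisk ν1 νm1 μ1 μm1 h φm φp - lam * normPen ν1 νm1 μ1 μm1 φm φp

/-- Best response of the Adversary to `h` w.r.t. the mass penalty. -/
def BRmass (ν1 νm1 : ℝ) (μ1 μm1 : Measure X) (lam ε : ℝ) (h : X → ℤ)
    (φm φp : X → X) : Prop :=
  IsAttack ε φm ∧ IsAttack ε φp ∧
    ∀ ψm ψp : X → X, IsAttack ε ψm → IsAttack ε ψp →
      scoreMass ν1 νm1 μ1 μm1 lam h ψm ψp ≤ scoreMass ν1 νm1 μ1 μm1 lam h φm φp

/-- Best response of the Adversary to `h` w.r.t. the norm penalty. -/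
def BRnorm (ν1 νm1 : ℝ) (μ1 μm1 : Measure X) (lam ε : ℝ) (h : X → ℤ)
    (φm φp : X → X) : Prop :=
  IsAttack ε φm ∧ IsAttack ε φp ∧
    ∀ ψm ψp : X → X, IsAttack ε ψm → IsAttack ε ψp →
      scoreNorm ν1 νm1 μ1 μm1 lam h ψm ψp ≤ scoreNorm ν1 νm1 μ1 μm1 lam h φm φp

/-- Adversarial risk of the mixture playing `h1` with probability `α`
and `h2` with probability `1 - α`. -/
def mixRisk (ν1 νm1 : ℝ) (μ1 μm1 : Measure X) (α : ℝ) (h1 h2 : X → ℤ)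
    (φm φp : X → X) : ℝ :=
  ν1 * ∫ z, (α * (if h1 z ≠ 1 then (1:ℝ) else 0)
      + (1 - α) * (if h2 z ≠ 1 then (1:ℝ) else 0)) ∂(μ1.map φp)
  + νm1 * ∫ z, (α * (if h1 z ≠ -1 then (1:ℝ) else 0)
      + (1 - α) * (if h2 z ≠ -1 then (1:ℝ) else 0)) ∂(μm1.map φm)

/-- Regularized adversarial score of the mixture, mass penalty. -/
def mixScoreMass (ν1 νm1 : ℝ) (μ1 μm1 : Measure X) (lam α : ℝ) (h1 h2 : X → ℤ)
    (φm φp : X → X) : ℝ :=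
  mixRisk ν1 νm1 μ1 μm1 α h1 h2 φm φp - lam * massPen ν1 νm1 μ1 μm1 φm φp

/-- Regularized adversarial score of the mixture, norm penalty. -/
def mixScoreNorm (ν1 νm1 : ℝ) (μ1 μm1 : Measure X) (lam α : ℝ) (h1 h2 : X → ℤ)
    (φm φp : X → X) : ℝ :=
  mixRisk ν1 νm1 μ1 μm1 α h1 h2 φm φp - lam * normPen ν1 νm1 μ1 μm1 φm φp

/-!
The attack on label `1` moves all mass out of the attackable part `D` of the positive region,
whereas the attack on label `-1` fixes every point of `D`, because `D` is disjoint from the negative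
region. Relabelling a set `D` of positively classified points as `-1` changes the risk by
`ν₁ ρ₁(D) - ν₋₁ ρ₋₁(D)`, where `ρ₁` and `ρ₋₁` are the attacked distributions. Here `ρ₁(D) = 0` and
`ρ₋₁(D) ≥ μ₋₁(D)`, so relabelling `D` strictly improves on `h` when `μ₋₁(D) > 0`.
-/

section Measure

variable {α β : Type*} [MeasurableSpace α] [MeasurableSpace β]

lemma map_apply_eq_zero_of_ae_notMem {μ : Measure α} {φ : α → β} (hφ : AEMeasurable φ μ)
    {s : Set β} (hs : MeasurableSet s) (h : ∀ᵐ x ∂μ, φ x ∉ s) : μ.map φ s = 0 :=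
  measure_eq_zero_iff_ae_notMem.2 ((ae_map_iff hφ hs.compl).2 h)

lemma measure_le_map_apply_of_ae_mem {μ : Measure α} {φ : α → β} (hφ : AEMeasurable φ μ)
    {s : Set α} {t : Set β} (h : ∀ᵐ x ∂μ, x ∈ s → φ x ∈ t) : μ s ≤ μ.map φ t :=
  (measure_mono_ae h).trans (Measure.le_map_apply hφ t)

end Measure

section Relabel

variable {α L : Type*} {s : Set α} [DecidablePred (· ∈ s)] {h : α → L} {a b : L}

lemma setOf_piecewise_const_ne_self :
    {x | s.piecewise (fun _ => b) h x ≠ b} = {x | h x ≠ b} \ s := by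
  ext x
  by_cases hx : x ∈ s <;> simp [hx]

lemma setOf_piecewise_const_ne_of_ne (hba : b ≠ a) :
    {x | s.piecewise (fun _ => b) h x ≠ a} = {x | h x ≠ a} ∪ s := by
  ext x
  by_cases hx : x ∈ s <;> simp [hx, hba]

variable [MeasurableSpace α] (ρ : Measure α) [IsFiniteMeasure ρ]

lemma measureReal_piecewise_const_ne_self (hs : MeasurableSet s) (hb : s ⊆ {x | h x ≠ b}) :
    ρ.real {x | s.piecewise (fun _ => b) h x ≠ b} = ρ.real {x | h x ≠ b} - ρ.real s := by
  rw [setOf_piecewise_const_ne_self, measureReal_sdiff hb hs]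

lemma measureReal_piecewise_const_ne_of_ne (hs : MeasurableSet s) (hba : b ≠ a)
    (ha : ∀ x ∈ s, h x = a) :
    ρ.real {x | s.piecewise (fun _ => b) h x ≠ a} = ρ.real {x | h x ≠ a} + ρ.real s := by
  have hdisj : Disjoint {x | h x ≠ a} s :=
    disjoint_left.2 fun x hne hx => hne (ha x hx)
  rw [setOf_piecewise_const_ne_of_ne hba, measureReal_union hdisj hs]

end Relabel

section Risk

variable {α : Type*} [MeasurableSpace α]

/-- The weighted zero-one risk of `h` when the points of label `1` are distributed as `ρ1` and those
of label `-1` as `ρm1`. The risk `advRisk` of a classifier under an attack is the case where `ρ1`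
and `ρm1` are the attacked distributions `μ1.map φp` and `μm1.map φm`. -/
def weightedRisk (ν1 νm1 : ℝ) (ρ1 ρm1 : Measure α) (h : α → ℤ) : ℝ :=
  ν1 * ρ1.real {x | h x ≠ 1} + νm1 * ρm1.real {x | h x ≠ -1}

lemma weightedRisk_piecewise_neg_one (ν1 νm1 : ℝ) (ρ1 ρm1 : Measure α) [IsFiniteMeasure ρ1]
    [IsFiniteMeasure ρm1] {h : α → ℤ} {s : Set α} [DecidablePred (· ∈ s)]
    (hs : MeasurableSet s) (hone : ∀ x ∈ s, h x = 1) :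
    weightedRisk ν1 νm1 ρ1 ρm1 (s.piecewise (fun _ => -1) h) =
      weightedRisk ν1 νm1 ρ1 ρm1 h + (ν1 * ρ1.real s - νm1 * ρm1.real s) := by
  have hne : ∀ x ∈ s, h x ≠ -1 := fun x hx => by simp [hone x hx]
  rw [weightedRisk, weightedRisk, measureReal_piecewise_const_ne_self ρm1 hs hne,
    measureReal_piecewise_const_ne_of_ne ρ1 hs (by decide) hone]
  ring

theorem bestResponse_attack_breaks_defender_general
    (ν1 : ℝ) {νm1 : ℝ} (hνm1 : 0 < νm1) {μ1 μm1 : Measure α} [IsFiniteMeasure μ1]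
    [IsFiniteMeasure μm1] {h : α → ℤ} {D : Set α} [DecidablePred (· ∈ D)]
    (hD : MeasurableSet D) (hone : ∀ x ∈ D, h x = 1) {φm φp : α → α}
    (hφm : AEMeasurable φm μm1) (hφp : AEMeasurable φp μ1)
    (hstay : ∀ᵐ x ∂μm1, x ∈ D → φm x ∈ D) (hleave : ∀ᵐ x ∂μ1, φp x ∉ D) :
    μ1.map φp D = 0 ∧
    μm1 D ≤ μm1.map φm D ∧
    (0 < μm1 D →
      ν1 * (μ1.map φp).real D < νm1 * (μm1.map φm).real D ∧
      weightedRisk ν1 νm1 (μ1.map φp) (μm1.map φm) (D.piecewise (fun _ => -1) h) <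
        weightedRisk ν1 νm1 (μ1.map φp) (μm1.map φm) h) := by
  have hzero : μ1.map φp D = 0 := map_apply_eq_zero_of_ae_notMem hφp hD hleave
  have hle : μm1 D ≤ μm1.map φm D := measure_le_map_apply_of_ae_mem hφm hstay
  refine ⟨hzero, hle, fun hpos => ?_⟩
  have hmass : 0 < (μm1.map φm).real D :=
    ENNReal.toReal_pos (hpos.trans_le hle).ne' (measure_ne_top _ _)
  have hlt : ν1 * (μ1.map φp).real D < νm1 * (μm1.map φm).real D := by
    rw [measureReal_def, hzero, ENNReal.toReal_zero, mul_zero]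
    exact mul_pos hνm1 hmass
  refine ⟨hlt, ?_⟩
  rw [weightedRisk_piecewise_neg_one _ _ _ _ hD hone]
  linarith

end Risk

lemma IsClf.piecewise_neg_one {h : X → ℤ} (hclf : IsClf h) {s : Set X}
    [DecidablePred (· ∈ s)] (hs : MeasurableSet s) : IsClf (s.piecewise (fun _ => -1) h) := by
  refine ⟨measurable_const.piecewise hs hclf.1, fun x => ?_⟩
  by_cases hx : x ∈ s
  · simp [hx]
  · simpa [hx] using hclf.2 x

lemma measurableSet_PhD {h : X → ℤ} (hh : Measurable h) (δ : ℝ) : MeasurableSet (PhD h δ) :=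
  (hh (measurableSet_singleton 1)).inter
    ((continuous_infDist_pt (Ph h)ᶜ).measurable measurableSet_Iic)

lemma notMem_NhD_of_mem_PhD {h : X → ℤ} {δ δ' : ℝ} {x : X} (hx : x ∈ PhD h δ) :
    x ∉ NhD h δ' := fun hx' =>
  absurd (hx.1.symm.trans hx'.1) (by decide)

/-- Key step of Theorem 1: an attack which moves exactly the attackable
positive points out of `P_h` (and fixes everything else on the positive class)
and likewise for the negative class empties `P_h(ε₂)` of attacked positive
mass while preserving its negative mass; consequently, if `μ₋₁(P_h(ε₂)) > 0`,
the Defender `h` no longer best-responds to this attack. -/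
theorem bestResponse_attack_breaks_defender
    (hXc : IsClosed X) (hXne : X.Nonempty)
    (ν1 νm1 : ℝ) (hν1 : ν1 ∈ Set.Ioo (0:ℝ) 1) (hνm1 : νm1 ∈ Set.Ioo (0:ℝ) 1)
    (hνsum : ν1 + νm1 = 1)
    (μ1 μm1 : Measure X) [IsProbabilityMeasure μ1] [IsProbabilityMeasure μm1]
    (hμ1 : FullSupport μ1) (hμm1 : FullSupport μm1)
    (lam ε2 : ℝ) (hlam : lam ∈ Set.Ioo (0:ℝ) 1) (hε2 : ε2 ∈ Set.Ioo (0:ℝ) 1)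
    (h : X → ℤ) (hclf : IsClf h)
    (φm φp : X → X) (hφm : IsAttack ε2 φm) (hφp : IsAttack ε2 φp)
    (hφp1 : ∀ x ∈ PhD h ε2, φp x ∈ (Ph h)ᶜ)
    (hφp2 : ∀ x ∉ PhD h ε2, φp x = x)
    (hφm1 : ∀ x ∈ NhD h ε2, φm x ∈ (Nh h)ᶜ)
    (hφm2 : ∀ x ∉ NhD h ε2, φm x = x) :
    (μ1.map φp) (PhD h ε2) = 0 ∧
    μm1 (PhD h ε2) ≤ (μm1.map φm) (PhD h ε2) ∧
    (0 < μm1 (PhD h ε2) →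
      ν1 * ((μ1.map φp) (PhD h ε2)).toReal <
        νm1 * ((μm1.map φm) (PhD h ε2)).toReal ∧
      ¬ (∀ h' : X → ℤ, IsClf h' →
        advRisk ν1 νm1 μ1 μm1 h φm φp ≤ advRisk ν1 νm1 μ1 μm1 h' φm φp)) := by
  classical
  have hleave (x : X) : φp x ∉ PhD h ε2 := by
    by_cases hx : x ∈ PhD h ε2
    · exact fun hφx => hφp1 x hx hφx.1
    · rwa [hφp2 x hx]
  have hstay (x : X) (hx : x ∈ PhD h ε2) : φm x ∈ PhD h ε2 := by
    rwa [hφm2 x (notMem_NhD_of_mem_PhD hx)]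
  have hD : MeasurableSet (PhD h ε2) := measurableSet_PhD hclf.1 ε2
  obtain ⟨hzero, hle, himprove⟩ := bestResponse_attack_breaks_defender_general ν1 hνm1.1 hD
    (fun _ hx => hx.1) hφm.1.aemeasurable hφp.1.aemeasurable (ae_of_all μm1 hstay)
    (ae_of_all μ1 hleave)
  refine ⟨hzero, hle, fun hpos => ⟨(himprove hpos).1, fun hmin => ?_⟩⟩
  exact (hmin _ (hclf.piecewise_neg_one hD)).not_gt (himprove hpos).2

end AdvGame
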